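/- Let J be a nonempty finite index set and define the linear map H̃ : ℝ^({0,1}×J) → ℝ^({0,1}×J) by (H̃ψ)_{(0,j)} = (ψ_{(0,j)} + ψ_{(1,j)})/2 and (H̃ψ)_{(1,j)} = (ψ_{(0,j)} − ψ_{(1,j)})/2 (a Hadamard gate applied to one grabit of a multi-grabit state). Then for every ψ, ‖H̃ψ‖₁ = Σ_{j∈J} max(|ψ_{(0,j)}|, |ψ_{(1,j)}|) ≥ (1/2)‖ψ‖₁, and there exists a nonzero ψ with ‖H̃ψ‖₁ = (1/2)‖ψ‖₁. Hence the destructive-interference measure 𝒟_H = sup over nonzero ψ of (1 − ‖H̃ψ‖₁/‖ψ‖₁) equals 1/2. -/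

import Mathlib

open scoped BigOperators

/-- The ℓ¹ norm of a vector on a finite index set. -/
noncomputable def l1norm {α : Type*} [Fintype α] (f : α → ℝ) : ℝ := ∑ a, |f a|

/-- A Hadamard gate applied to one grabit of a multi-grabit state:
`(H̃ψ)_(0,j) = (ψ_(0,j) + ψ_(1,j))/2`, `(H̃ψ)_(1,j) = (ψ_(0,j) − ψ_(1,j))/2`. -/
noncomputable def Htilde {J : Type*} (ψ : Fin 2 × J → ℝ) : Fin 2 × J → ℝ :=
  fun p =>
    if p.1 = 0 then (ψ (0, p.2) + ψ (1, p.2)) / 2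
    else (ψ (0, p.2) - ψ (1, p.2)) / 2

/-!
On each fibre `{0, 1} × {j}` the gate acts by `(a, b) ↦ ((a + b) / 2, (a - b) / 2)`, and applying
`|a + b| ⊔ |a - b| = |a| + |b|` to the image shows that its `ℓ¹` norm is `max |a| |b|`. This is at
least the mean of `|a|` and `|b|`, with equality when `|a| = |b|`: a state of constant amplitude
then loses exactly half of its norm, because every difference cancels.
-/

theorem abs_add_sup_abs_sub {G : Type*} [Lattice G] [AddCommGroup G] [AddLeftMono G] (a b : G) :
    |a + b| ⊔ |a - b| = |a| + |b| := by
  simp only [abs, add_sup, sup_add, sub_eq_add_neg, neg_add, neg_neg]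
  ac_rfl

theorem abs_add_div_two_add_abs_sub_div_two {𝕜 : Type*} [Field 𝕜] [LinearOrder 𝕜]
    [IsStrictOrderedRing 𝕜] (a b : 𝕜) : |(a + b) / 2| + |(a - b) / 2| = max |a| |b| := by
  rw [← abs_add_sup_abs_sub]
  congr 2 <;> ring

theorem l1norm_pos {α : Type*} [Fintype α] {f : α → ℝ} (hf : f ≠ 0) : 0 < l1norm f := by
  obtain ⟨a, ha⟩ := Function.ne_iff.mp hf
  exact Finset.sum_pos' (fun _ _ => abs_nonneg _) ⟨a, Finset.mem_univ a, abs_pos.mpr ha⟩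

theorem isGreatest_one_sub_l1norm_div {α β : Type*} [Fintype α] [Fintype β]
    {T : (α → ℝ) → β → ℝ} {c : ℝ} (hle : ∀ ψ, c * l1norm ψ ≤ l1norm (T ψ))
    (heq : ∃ ψ, ψ ≠ 0 ∧ l1norm (T ψ) = c * l1norm ψ) :
    IsGreatest {x : ℝ | ∃ ψ, ψ ≠ 0 ∧ x = 1 - l1norm (T ψ) / l1norm ψ} (1 - c) := by
  constructor
  · obtain ⟨ψ, hψ, h⟩ := heq
    exact ⟨ψ, hψ, by rw [h, mul_div_cancel_right₀ _ (l1norm_pos hψ).ne']⟩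
  · rintro _ ⟨ψ, hψ, rfl⟩
    exact sub_le_sub_left ((le_div_iff₀ (l1norm_pos hψ)).mpr (hle ψ)) 1

section Hadamard

variable {J : Type*} [Fintype J]

theorem l1norm_fin_two_prod (ψ : Fin 2 × J → ℝ) :
    l1norm ψ = ∑ j, (|ψ (0, j)| + |ψ (1, j)|) := by
  simp only [l1norm, Fintype.sum_prod_type_right, Fin.sum_univ_two]

theorem l1norm_Htilde (ψ : Fin 2 × J → ℝ) :
    l1norm (Htilde ψ) = ∑ j, max |ψ (0, j)| |ψ (1, j)| := by
  simp [l1norm_fin_two_prod, Htilde, abs_add_div_two_add_abs_sub_div_two]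

theorem half_l1norm_le_l1norm_Htilde (ψ : Fin 2 × J → ℝ) :
    1 / 2 * l1norm ψ ≤ l1norm (Htilde ψ) := by
  rw [l1norm_Htilde, l1norm_fin_two_prod, Finset.mul_sum]
  gcongr with j
  linarith [le_max_left |ψ (0, j)| |ψ (1, j)|, le_max_right |ψ (0, j)| |ψ (1, j)|]

theorem l1norm_Htilde_eq_half_of_abs_eq {ψ : Fin 2 × J → ℝ}
    (h : ∀ j, |ψ (0, j)| = |ψ (1, j)|) : l1norm (Htilde ψ) = 1 / 2 * l1norm ψ := by
  rw [l1norm_Htilde, l1norm_fin_two_prod, Finset.mul_sum]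
  refine Finset.sum_congr rfl fun j _ => ?_
  rw [h j, max_self]
  ring

end Hadamard

/-- `‖H̃ψ‖₁ = ∑_j max(|ψ_(0,j)|, |ψ_(1,j)|) ≥ (1/2)‖ψ‖₁`, with equality
attained by some nonzero `ψ`; hence the destructive-interference measure of `H̃`,
the supremum of `1 − ‖H̃ψ‖₁/‖ψ‖₁` over nonzero `ψ`, equals `1/2`. -/
theorem hadamard_destructive_interference {J : Type*} [Fintype J] [Nonempty J] :
    (∀ ψ : Fin 2 × J → ℝ,
      l1norm (Htilde ψ) = ∑ j : J, max |ψ (0, j)| |ψ (1, j)| ∧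
        (1 / 2) * l1norm ψ ≤ l1norm (Htilde ψ)) ∧
    (∃ ψ : Fin 2 × J → ℝ, ψ ≠ 0 ∧ l1norm (Htilde ψ) = (1 / 2) * l1norm ψ) ∧
    IsGreatest {x : ℝ | ∃ ψ : Fin 2 × J → ℝ,
      ψ ≠ 0 ∧ x = 1 - l1norm (Htilde ψ) / l1norm ψ} (1 / 2) := by
  have attained : ∃ ψ : Fin 2 × J → ℝ, ψ ≠ 0 ∧ l1norm (Htilde ψ) = (1 / 2) * l1norm ψ :=
    ⟨1, one_ne_zero, l1norm_Htilde_eq_half_of_abs_eq fun _ => rfl⟩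
  refine ⟨fun ψ => ⟨l1norm_Htilde ψ, half_l1norm_le_l1norm_Htilde ψ⟩, attained, ?_⟩
  convert isGreatest_one_sub_l1norm_div half_l1norm_le_l1norm_Htilde attained using 1
  norm_num
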